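/- arXiv:2401.11786 — 4 statements merged into one kernel-verified Lean document; each statement's English description precedes it below -/
import Mathlib

section
/- Under the condition λ₁ ≤ ρ_q < (λ₁+λ₂)/2, for any y ∈ Y the symmetric matrix ∇φ(y)yᵀ + y(∇φ(y))ᵀ satisfies the Loewner-order bounds −χ_g B ⪯ ∇φ(y)yᵀ + y(∇φ(y))ᵀ ⪯ χ_g B, where ∇φ(y) = (2/(yᵀy+1))·(By − φ(y)y + b) and χ_g = (8(ρ_q − λ₁)/λ₁)·((λ₁+λ₂)/(2(λ₂−λ₁)))^{1/2}. -/
open Matrix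

noncomputable def Mnorm {n : ℕ} (M : Matrix (Fin n) (Fin n) ℝ) (x : Fin n → ℝ) : ℝ :=
  Real.sqrt (x ⬝ᵥ (M *ᵥ x))

noncomputable def Rq {n : ℕ} (A M : Matrix (Fin n) (Fin n) ℝ) (x : Fin n → ℝ) : ℝ :=
  (x ⬝ᵥ (A *ᵥ x)) / (x ⬝ᵥ (M *ᵥ x))

/-- ψ(x) = QᵀMx / (qᵀMx) -/
noncomputable def psiMap {n m : ℕ} (M : Matrix (Fin n) (Fin n) ℝ) (q : Fin n → ℝ)
    (Q : Matrix (Fin n) (Fin m) ℝ) (x : Fin n → ℝ) : Fin m → ℝ :=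
  (q ⬝ᵥ (M *ᵥ x))⁻¹ • ((Qᵀ * M) *ᵥ x)

/-- ψ†(y) = (Qy + q)/‖Qy + q‖_M -/
noncomputable def psiDag {n m : ℕ} (M : Matrix (Fin n) (Fin n) ℝ) (q : Fin n → ℝ)
    (Q : Matrix (Fin n) (Fin m) ℝ) (y : Fin m → ℝ) : Fin n → ℝ :=
  (Mnorm M (Q *ᵥ y + q))⁻¹ • (Q *ᵥ y + q)

/-- The hemisphere S₊ = {x : ‖x‖_M = 1, qᵀMx > 0}. -/
def Splus {n : ℕ} (M : Matrix (Fin n) (Fin n) ℝ) (q : Fin n → ℝ) : Set (Fin n → ℝ) :=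
  {x | Mnorm M x = 1 ∧ 0 < q ⬝ᵥ (M *ᵥ x)}

/-- X = {x ∈ S₊ : Rq(x) ≤ Rq(q)}. -/
def Xset {n : ℕ} (A M : Matrix (Fin n) (Fin n) ℝ) (q : Fin n → ℝ) : Set (Fin n → ℝ) :=
  {x | x ∈ Splus M q ∧ Rq A M x ≤ Rq A M q}

/-- φ(y) = (yᵀBy + 2yᵀb + ρ)/(yᵀy + 1). -/
noncomputable def phiAux {m : ℕ} (B : Matrix (Fin m) (Fin m) ℝ) (b : Fin m → ℝ) (ρ : ℝ)
    (y : Fin m → ℝ) : ℝ :=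
  (y ⬝ᵥ (B *ᵥ y) + 2 * (y ⬝ᵥ b) + ρ) / (y ⬝ᵥ y + 1)

/-- ∇φ(y) = (2/(yᵀy+1))(By − φ(y)y + b). -/
noncomputable def gradPhi {m : ℕ} (B : Matrix (Fin m) (Fin m) ℝ) (b : Fin m → ℝ) (ρ : ℝ)
    (y : Fin m → ℝ) : Fin m → ℝ :=
  (2 / (y ⬝ᵥ y + 1)) • (B *ᵥ y - phiAux B b ρ y • y + b)

/-!
For `y` in the chart put `x = q + Q y`, so that `‖x‖² = ‖y‖² + 1` and `φ(y)` is the Rayleigh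
quotient `f` of `x`. For `z = Q v` the quadratic form of `∇φ yᵀ + y ∇φᵀ` at `v` is
`4 r t / ‖x‖²`, where `t = zᵀMx` and `r = zᵀAx - f t` is the residual of `x` tested against `z`,
while that of `B` is `zᵀAz`. Cauchy-Schwarz for the semidefinite forms `A - λ₁ M` and `M` gives
`λ₁ r² ≤ f (f - λ₁) (zᵀAz) ‖x‖²`. The overlap `t` is small because `z ⟂ q` and the spectral gap
forces both `q` and `x` to lie near `u₁`: `(λ₂ - λ₁) t² ≤ 4 (ρ - λ₁) ‖z‖² ‖x‖²`. Finally
`ρ ‖z‖² ≤ (λ₁ + λ₂ - ρ) ‖z‖² ≤ zᵀAz`, so `|r t|` is at most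
`2 (ρ - λ₁) / √(λ₁ (λ₂ - λ₁))` times `(zᵀAz) ‖x‖²`.
-/

section BilinForm

variable {E : Type*} [AddCommGroup E] [Module ℝ E] {a m : LinearMap.BilinForm ℝ E}

lemma sq_apply_le_mul_apply_self (hm : m.IsPosSemidef) (x y : E) :
    m x y ^ 2 ≤ m x x * m y y :=
  m.apply_sq_le_of_symm hm.nonneg (LinearMap.BilinForm.isSymm_iff.1 hm.isSymm) x y

lemma sq_apply_sub_mul_le {e : E} (hm : m.IsPosSemidef) (he : m e e = 1) (x z : E) :
    (m z x - m e z * m e x) ^ 2 ≤ m z z * (m x x - m e x ^ 2) := by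
  have hcs := sq_apply_le_mul_apply_self hm z (x - m e x • e)
  simp only [map_sub, map_smul, LinearMap.sub_apply, LinearMap.smul_apply, smul_eq_mul, he,
    hm.eq z e, hm.eq x e] at hcs
  linear_combination hcs

lemma sq_apply_le_of_unit {e : E} (hm : m.IsPosSemidef) (he : m e e = 1) (x : E) :
    m e x ^ 2 ≤ m x x := by
  simpa [he] using sq_apply_le_mul_apply_self hm e x

/-- `u` is an `m`-unit eigenvector of the pencil `(a, m)` with eigenvalue `α`, and the Rayleigh
quotient `a w w / m w w` is at least `β` on the `m`-orthogonal complement of `u`. The value `β`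
plays the role of the second eigenvalue, but need not be attained. -/
structure HasSpectralGap (a m : LinearMap.BilinForm ℝ E) (u : E) (α β : ℝ) : Prop where
  unit : m u u = 1
  eigen : ∀ w, a u w = α * m u w
  gap : ∀ w, m u w = 0 → β * m w w ≤ a w w

namespace HasSpectralGap

variable {u : E} {α β ρ : ℝ}

lemma le_apply_self (h : HasSpectralGap a m u α β) (ha : a.IsSymm) (hm : m.IsSymm) (w : E) :
    β * m w w - (β - α) * m u w ^ 2 ≤ a w w := by
  have hgap := h.gap (w - m u w • u) (by simp [h.unit])
  simp only [map_sub, map_smul, LinearMap.sub_apply, LinearMap.smul_apply, smul_eq_mul, ha.eq w u,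
    hm.eq w u, h.eigen, h.unit] at hgap
  linear_combination hgap

lemma isPosSemidef_sub (h : HasSpectralGap a m u α β) (ha : a.IsSymm) (hm : m.IsPosSemidef)
    (hαβ : α ≤ β) : (a - α • m).IsPosSemidef where
  isSymm := ha.sub (hm.isSymm.smul α)
  nonneg w := by
    have hbessel := mul_le_mul_of_nonneg_left (sq_apply_le_of_unit hm h.unit w) (sub_nonneg.2 hαβ)
    simp only [LinearMap.sub_apply, LinearMap.smul_apply, smul_eq_mul]
    linarith [h.le_apply_self ha hm.isSymm w]

lemma mul_apply_self_le (h : HasSpectralGap a m u α β) (ha : a.IsSymm) (hm : m.IsPosSemidef)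
    (hαβ : α ≤ β) (w : E) : α * m w w ≤ a w w := by
  simpa using (h.isPosSemidef_sub ha hm hαβ).nonneg w

lemma sub_mul_apply_self_sub_sq_le (h : HasSpectralGap a m u α β) (ha : a.IsSymm) (hm : m.IsSymm)
    {x : E} (hx : a x x ≤ ρ * m x x) :
    (β - α) * (m x x - m u x ^ 2) ≤ (ρ - α) * m x x := by
  linarith [h.le_apply_self ha hm x]

section Orthogonal

variable {q z : E}

lemma sub_mul_sq_apply_le (h : HasSpectralGap a m u α β) (ha : a.IsSymm) (hm : m.IsPosSemidef)
    (hαβ : α ≤ β) (hq : m q q = 1) (hqρ : a q q ≤ ρ) (hqz : m q z = 0) :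
    (β - α) * m u z ^ 2 ≤ (ρ - α) * m z z := by
  have hproj : m u z ^ 2 ≤ m z z * (1 - m u q ^ 2) := by
    simpa [hqz, h.unit, hm.eq z u, hm.eq q u] using sq_apply_sub_mul_le hm hq u z
  have hangle := h.sub_mul_apply_self_sub_sq_le ha hm.isSymm (ρ := ρ) (by rwa [hq, mul_one])
  rw [hq, mul_one] at hangle
  calc (β - α) * m u z ^ 2
      ≤ (β - α) * (m z z * (1 - m u q ^ 2)) :=
        mul_le_mul_of_nonneg_left hproj (sub_nonneg.2 hαβ)
    _ = (β - α) * (1 - m u q ^ 2) * m z z := by ring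
    _ ≤ (ρ - α) * m z z := mul_le_mul_of_nonneg_right hangle (hm.nonneg z)

lemma add_sub_mul_apply_self_le (h : HasSpectralGap a m u α β) (ha : a.IsSymm)
    (hm : m.IsPosSemidef) (hαβ : α ≤ β) (hq : m q q = 1) (hqρ : a q q ≤ ρ) (hqz : m q z = 0) :
    (α + β - ρ) * m z z ≤ a z z := by
  linarith [h.le_apply_self ha hm.isSymm z, h.sub_mul_sq_apply_le ha hm hαβ hq hqρ hqz]

lemma sub_mul_sq_apply_le_four_mul (h : HasSpectralGap a m u α β) (ha : a.IsSymm)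
    (hm : m.IsPosSemidef) (hαβ : α ≤ β) (hq : m q q = 1) (hqρ : a q q ≤ ρ) (hqz : m q z = 0)
    {x : E} (hx : a x x ≤ ρ * m x x) :
    (β - α) * m z x ^ 2 ≤ 4 * (ρ - α) * m z z * m x x := by
  -- `q` and `x` are both close to `u`, and `z ⟂ q`: split `x` along `u` and its complement.
  have hαβ' : 0 ≤ β - α := sub_nonneg.2 hαβ
  have hpar : (β - α) * (m u z * m u x) ^ 2 ≤ (ρ - α) * m z z * m x x :=
    calc (β - α) * (m u z * m u x) ^ 2
        = (β - α) * m u z ^ 2 * m u x ^ 2 := by ring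
      _ ≤ (β - α) * m u z ^ 2 * m x x := by gcongr; exact sq_apply_le_of_unit hm h.unit x
      _ ≤ (ρ - α) * m z z * m x x := mul_le_mul_of_nonneg_right
        (h.sub_mul_sq_apply_le ha hm hαβ hq hqρ hqz) (hm.nonneg x)
  have hperp : (β - α) * (m z x - m u z * m u x) ^ 2 ≤ (ρ - α) * m z z * m x x :=
    calc (β - α) * (m z x - m u z * m u x) ^ 2
        ≤ (β - α) * (m z z * (m x x - m u x ^ 2)) := by
          gcongr; exact sq_apply_sub_mul_le hm h.unit x z
      _ = (β - α) * (m x x - m u x ^ 2) * m z z := by ring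
      _ ≤ (ρ - α) * m x x * m z z := mul_le_mul_of_nonneg_right
        (h.sub_mul_apply_self_sub_sq_le ha hm.isSymm hx) (hm.nonneg z)
      _ = (ρ - α) * m z z * m x x := by ring
  have hsq : m z x ^ 2 ≤ 2 * ((m u z * m u x) ^ 2 + (m z x - m u z * m u x) ^ 2) := by
    simpa using add_sq_le (a := m u z * m u x) (b := m z x - m u z * m u x)
  linarith [mul_le_mul_of_nonneg_left hsq hαβ']

end Orthogonal

end HasSpectralGap

lemma mul_sq_residual_le {α f : ℝ} (hm : m.IsPosSemidef)
    (ham : (a - α • m).IsPosSemidef) (hα : 0 ≤ α) (hαf : α ≤ f) {x : E}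
    (hx : a x x = f * m x x) (z : E) :
    α * (a z x - f * m z x) ^ 2 ≤ f * (f - α) * a z z * m x x := by
  -- The residual is `s - δ * m z x`; Cauchy-Schwarz for the semidefinite forms `a - α • m` and `m`
  -- bounds the two terms separately, and Young's inequality recombines them.
  set δ := f - α
  have hδ : 0 ≤ δ := sub_nonneg.2 hαf
  set s := a z x - α * m z x
  have hs : s ^ 2 ≤ (a z z - α * m z z) * (δ * m x x) := by
    have hcs := sq_apply_le_mul_apply_self ham z x
    simpa [hx, ← sub_mul] using hcs
  have ht : m z x ^ 2 ≤ m z z * m x x := sq_apply_le_mul_apply_self hm z x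
  have hyoung : α * (s - δ * m z x) ^ 2 ≤ f * (s ^ 2 + α * δ * m z x ^ 2) := by
    have := mul_nonneg hδ (sq_nonneg (s + α * m z x))
    linear_combination this
  calc α * (a z x - f * m z x) ^ 2
      = α * (s - δ * m z x) ^ 2 := by ring
    _ ≤ f * (s ^ 2 + α * δ * m z x ^ 2) := hyoung
    _ ≤ f * ((a z z - α * m z z) * (δ * m x x) + α * δ * (m z z * m x x)) := by
      have : 0 ≤ f := hα.trans hαf
      gcongr
    _ = f * δ * a z z * m x x := by ring

lemma HasSpectralGap.mul_sq_residual_mul_apply_le {u q x z : E} {α β ρ f : ℝ}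
    (h : HasSpectralGap a m u α β) (ha : a.IsSymm) (hm : m.IsPosSemidef) (hα : 0 ≤ α)
    (hαβ : α ≤ β) (hρ : ρ ≤ (α + β) / 2) (hq : m q q = 1) (hqρ : a q q ≤ ρ) (hqz : m q z = 0)
    (hx : a x x = f * m x x) (hx₀ : 0 < m x x) (hf : f ≤ ρ) :
    α * (β - α) * ((a z x - f * m z x) * m z x) ^ 2 ≤ (2 * (ρ - α) * (a z z * m x x)) ^ 2 := by
  have hαf : α ≤ f := le_of_mul_le_mul_right (hx ▸ h.mul_apply_self_le ha hm hαβ x) hx₀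
  have hρ₀ : 0 ≤ ρ := hα.trans (hαf.trans hf)
  have : 0 ≤ f - α := sub_nonneg.2 hαf
  have hρα : 0 ≤ ρ - α := sub_nonneg.2 (hαf.trans hf)
  have : 0 ≤ β - α := sub_nonneg.2 hαβ
  -- This is where `ρ ≤ (α + β) / 2` enters.
  have hz : ρ * m z z ≤ a z z :=
    (mul_le_mul_of_nonneg_right (by linarith) (hm.nonneg z)).trans
      (h.add_sub_mul_apply_self_le ha hm hαβ hq hqρ hqz)
  have hzz : 0 ≤ a z z := (mul_nonneg hρ₀ (hm.nonneg z)).trans hz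
  have hresidual : α * (a z x - f * m z x) ^ 2 ≤ ρ * (ρ - α) * a z z * m x x :=
    (mul_sq_residual_le hm (h.isPosSemidef_sub ha hm hαβ) hα hαf hx z).trans (by gcongr)
  have hoverlap : (β - α) * m z x ^ 2 ≤ 4 * (ρ - α) * m z z * m x x :=
    h.sub_mul_sq_apply_le_four_mul ha hm hαβ hq hqρ hqz
      (hx.trans_le (mul_le_mul_of_nonneg_right hf hx₀.le))
  calc α * (β - α) * ((a z x - f * m z x) * m z x) ^ 2
      = (α * (a z x - f * m z x) ^ 2) * ((β - α) * m z x ^ 2) := by ring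
    _ ≤ (ρ * (ρ - α) * a z z * m x x) * (4 * (ρ - α) * m z z * m x x) := by gcongr
    _ = 4 * (ρ - α) ^ 2 * a z z * (ρ * m z z) * m x x ^ 2 := by ring
    _ ≤ 4 * (ρ - α) ^ 2 * a z z * a z z * m x x ^ 2 := by gcongr
    _ = (2 * (ρ - α) * (a z z * m x x)) ^ 2 := by ring

lemma HasSpectralGap.abs_residual_mul_apply_le {u q x z : E} {α β ρ f : ℝ}
    (h : HasSpectralGap a m u α β) (ha : a.IsSymm) (hm : m.IsPosSemidef) (hα : 0 < α)
    (hαβ : α < β) (hρ : ρ ≤ (α + β) / 2) (hq : m q q = 1) (hqρ : a q q ≤ ρ) (hqz : m q z = 0)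
    (hx : a x x = f * m x x) (hx₀ : 0 < m x x) (hf : f ≤ ρ) :
    |(a z x - f * m z x) * m z x| ≤ 2 * (ρ - α) / √(α * (β - α)) * (a z z * m x x) := by
  have hgap : 0 < α * (β - α) := mul_pos hα (sub_pos.2 hαβ)
  have hαρ : α ≤ ρ := by simpa [hq] using (h.mul_apply_self_le ha hm hαβ.le q).trans hqρ
  have hzz : 0 ≤ a z z :=
    (mul_nonneg hα.le (hm.nonneg z)).trans (h.mul_apply_self_le ha hm hαβ.le z)
  refine abs_le_of_sq_le_sq ?_ (by have := sub_nonneg.2 hαρ; positivity)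
  have hsq := h.mul_sq_residual_mul_apply_le ha hm hα.le hαβ.le hρ hq hqρ hqz hx hx₀ hf
  rw [div_mul_eq_mul_div, div_pow, Real.sq_sqrt hgap.le, le_div_iff₀ hgap]
  linarith

end BilinForm

lemma div_sqrt_mul_sub_le {α β c : ℝ} (hα : 0 < α) (hαβ : α < β) (hc : 0 ≤ c) :
    c / √(α * (β - α)) ≤ c / α * √((α + β) / (2 * (β - α))) := by
  have : 0 < β - α := sub_pos.2 hαβ
  calc c / √(α * (β - α))
      = c / α * (α / √(α * (β - α))) := (div_mul_div_cancel₀ hα.ne').symm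
    _ = c / α * √(α / (β - α)) := by
        rw [Real.sqrt_mul hα.le, Real.sqrt_div hα.le, ← div_div, Real.div_sqrt]
    _ = c / α * √((α + α) / (2 * (β - α))) := by rw [← two_mul, mul_div_mul_left _ _ two_ne_zero]
    _ ≤ c / α * √((α + β) / (2 * (β - α))) := by gcongr

section Pencil

variable {ι : Type*} [Fintype ι] {A M : Matrix ι ι ℝ}

lemma dotProduct_mulVec_comm_of_isSymm (hA : A.IsSymm) (x y : ι → ℝ) :
    x ⬝ᵥ A *ᵥ y = y ⬝ᵥ A *ᵥ x := by
  rw [← dotProduct_transpose_mulVec, hA.eq]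

lemma posSemidef_iff_isSymm_and_nonneg :
    M.PosSemidef ↔ M.IsSymm ∧ ∀ v, 0 ≤ v ⬝ᵥ M *ᵥ v := by
  simp [posSemidef_iff_dotProduct_mulVec]

lemma dotProduct_vecMulVec_add_vecMulVec_mulVec (g y v : ι → ℝ) :
    v ⬝ᵥ (vecMulVec g y + vecMulVec y g) *ᵥ v = 2 * ((g ⬝ᵥ v) * (y ⬝ᵥ v)) := by
  rw [add_mulVec, vecMulVec_mulVec, vecMulVec_mulVec, op_smul_eq_smul, op_smul_eq_smul,
    dotProduct_comm, add_dotProduct, smul_dotProduct, smul_dotProduct]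
  simp only [smul_eq_mul]
  ring

lemma posSemidef_vecMulVec_add_vecMulVec_bounds {B : Matrix ι ι ℝ} (hB : B.IsSymm)
    {g y : ι → ℝ} {c : ℝ} (h : ∀ v, |2 * ((g ⬝ᵥ v) * (y ⬝ᵥ v))| ≤ c * (v ⬝ᵥ B *ᵥ v)) :
    ((vecMulVec g y + vecMulVec y g) - (-c) • B).PosSemidef ∧
      (c • B - (vecMulVec g y + vecMulVec y g)).PosSemidef := by
  have hsymm : (vecMulVec g y + vecMulVec y g).IsSymm := by
    rw [IsSymm, transpose_add, transpose_vecMulVec, transpose_vecMulVec, add_comm]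
  simp only [posSemidef_iff_isSymm_and_nonneg, sub_mulVec, smul_mulVec, dotProduct_sub,
    dotProduct_smul, smul_eq_mul, dotProduct_vecMulVec_add_vecMulVec_mulVec]
  refine ⟨⟨hsymm.sub (hB.smul _), fun v => ?_⟩, (hB.smul c).sub hsymm, fun v => ?_⟩
  · linarith [(abs_le.1 (h v)).1]
  · linarith [(abs_le.1 (h v)).2]

lemma sum_dotProduct_mulVec_smul_eq_self {κ : Type*} [Fintype κ] [DecidableEq κ]
    (hcard : Fintype.card κ = Fintype.card ι) {e : κ → ι → ℝ}
    (he : ∀ i j, e i ⬝ᵥ M *ᵥ e j = if i = j then 1 else 0) (w : ι → ℝ) :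
    ∑ k, (e k ⬝ᵥ M *ᵥ w) • e k = w := by
  classical
  have hgram : (of e * M) * (of e)ᵀ = 1 := by
    ext i j
    rw [Matrix.mul_assoc, one_apply, ← he i j]
    rfl
  have hcomplete : (of e)ᵀ * (of e * M) = 1 := (mul_eq_one_comm_of_card_eq _ _ _ hcard).1 hgram
  calc ∑ k, (e k ⬝ᵥ M *ᵥ w) • e k
      = (of e)ᵀ *ᵥ (of e *ᵥ M *ᵥ w) := by
        simp only [mulVec_transpose, vecMul_eq_sum]
        rfl
    _ = w := by rw [mulVec_mulVec, mulVec_mulVec, Matrix.mul_assoc, hcomplete, one_mulVec]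

variable [DecidableEq ι]

lemma isPosSemidef_toBilin' (hM : M.PosSemidef) : M.toBilin'.IsPosSemidef where
  isSymm := Matrix.isSymm_toBilin'_iff_isSymm.2 (isHermitian_iff_isSymm.1 hM.isHermitian)
  nonneg x := by simpa [Matrix.toBilin'_apply'] using hM.dotProduct_mulVec_nonneg x

lemma dotProduct_mulVec_self_eq_sum (hM : M.IsSymm) {lam : ι → ℝ} {u : ι → ι → ℝ}
    (heig : ∀ i, A *ᵥ u i = lam i • (M *ᵥ u i))
    (horth : ∀ i j, u i ⬝ᵥ M *ᵥ u j = if i = j then 1 else 0) (w : ι → ℝ) :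
    w ⬝ᵥ A *ᵥ w = ∑ i, lam i * (u i ⬝ᵥ M *ᵥ w) ^ 2 := by
  conv_lhs => enter [2]; rw [← sum_dotProduct_mulVec_smul_eq_self rfl horth w]
  rw [mulVec_sum, dotProduct_sum]
  refine Finset.sum_congr rfl fun i _ => ?_
  rw [mulVec_smul, heig, dotProduct_smul, dotProduct_smul, dotProduct_mulVec_comm_of_isSymm hM]
  simp only [smul_eq_mul]
  ring

lemma hasSpectralGap_toBilin' (hA : A.IsSymm) (hM : M.IsSymm) {lam : ι → ℝ} {u : ι → ι → ℝ}
    (heig : ∀ i, A *ᵥ u i = lam i • (M *ᵥ u i))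
    (horth : ∀ i j, u i ⬝ᵥ M *ᵥ u j = if i = j then 1 else 0) {i₀ : ι} {β : ℝ}
    (hβ : ∀ i ≠ i₀, β ≤ lam i) :
    HasSpectralGap A.toBilin' M.toBilin' (u i₀) (lam i₀) β where
  unit := by simp [Matrix.toBilin'_apply', horth]
  eigen w := by
    simp only [Matrix.toBilin'_apply']
    rw [dotProduct_mulVec_comm_of_isSymm hA, heig, dotProduct_smul, smul_eq_mul,
      dotProduct_mulVec_comm_of_isSymm hM]
  gap w hw := by
    simp only [Matrix.toBilin'_apply'] at hw ⊢
    rw [dotProduct_mulVec_self_eq_sum hM heig horth,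
      dotProduct_mulVec_self_eq_sum hM (lam := 1) (fun _ => (one_smul _ _).symm) horth,
      Finset.mul_sum]
    refine Finset.sum_le_sum fun i _ => ?_
    rcases eq_or_ne i i₀ with rfl | hi
    · simp [hw]
    · simpa using mul_le_mul_of_nonneg_right (hβ i hi) (sq_nonneg (u i ⬝ᵥ M *ᵥ w))

end Pencil

section Chart

variable {n m : ℕ} {A M : Matrix (Fin n) (Fin n) ℝ} {q : Fin n → ℝ}
  {Q : Matrix (Fin n) (Fin m) ℝ}

lemma dotProduct_transpose_mul_mulVec (C : Matrix (Fin n) (Fin n) ℝ) (v : Fin m → ℝ)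
    (w : Fin n → ℝ) : v ⬝ᵥ (Qᵀ * C) *ᵥ w = (Q *ᵥ v) ⬝ᵥ C *ᵥ w := by
  rw [← mulVec_mulVec, dotProduct_transpose_mulVec, dotProduct_comm]

lemma dotProduct_transpose_mul_mul_mulVec (C : Matrix (Fin n) (Fin n) ℝ) (v y : Fin m → ℝ) :
    v ⬝ᵥ (Qᵀ * C * Q) *ᵥ y = (Q *ᵥ v) ⬝ᵥ C *ᵥ (Q *ᵥ y) := by
  rw [← dotProduct_transpose_mul_mulVec, mulVec_mulVec]

lemma dotProduct_mulVec_add_mulVec_self (hA : A.IsSymm) (y : Fin m → ℝ) :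
    (q + Q *ᵥ y) ⬝ᵥ A *ᵥ (q + Q *ᵥ y) =
      y ⬝ᵥ (Qᵀ * A * Q) *ᵥ y + 2 * (y ⬝ᵥ (Qᵀ * A) *ᵥ q) + q ⬝ᵥ A *ᵥ q := by
  rw [dotProduct_transpose_mul_mul_mulVec, dotProduct_transpose_mul_mulVec, mulVec_add,
    add_dotProduct, dotProduct_add, dotProduct_add,
    dotProduct_mulVec_comm_of_isSymm hA q (Q *ᵥ y)]
  ring

lemma mulVec_dotProduct_mulVec_eq_zero (hQMq : (Qᵀ * M) *ᵥ q = 0) (v : Fin m → ℝ) :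
    (Q *ᵥ v) ⬝ᵥ M *ᵥ q = 0 := by
  rw [← dotProduct_transpose_mul_mulVec, hQMq, dotProduct_zero]

lemma dotProduct_mulVec_add_mulVec_of_orthonormal (hM : M.IsSymm) (hq : q ⬝ᵥ M *ᵥ q = 1)
    (hQMQ : Qᵀ * M * Q = 1) (hQMq : (Qᵀ * M) *ᵥ q = 0) (y : Fin m → ℝ) :
    (q + Q *ᵥ y) ⬝ᵥ M *ᵥ (q + Q *ᵥ y) = y ⬝ᵥ y + 1 := by
  simp [dotProduct_mulVec_add_mulVec_self hM, hq, hQMQ, hQMq]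

lemma mulVec_dotProduct_mulVec_add_of_orthonormal (hQMQ : Qᵀ * M * Q = 1)
    (hQMq : (Qᵀ * M) *ᵥ q = 0) (v y : Fin m → ℝ) :
    (Q *ᵥ v) ⬝ᵥ M *ᵥ (q + Q *ᵥ y) = y ⬝ᵥ v := by
  rw [mulVec_add, dotProduct_add, mulVec_dotProduct_mulVec_eq_zero hQMq,
    ← dotProduct_transpose_mul_mul_mulVec, hQMQ, one_mulVec, zero_add, dotProduct_comm]

lemma phiAux_eq_Rq (hA : A.IsSymm) (hM : M.IsSymm) (hq : q ⬝ᵥ M *ᵥ q = 1)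
    (hQMQ : Qᵀ * M * Q = 1) (hQMq : (Qᵀ * M) *ᵥ q = 0) (y : Fin m → ℝ) :
    phiAux (Qᵀ * A * Q) ((Qᵀ * A) *ᵥ q) (Rq A M q) y = Rq A M (q + Q *ᵥ y) := by
  rw [phiAux, Rq, Rq, hq, div_one, dotProduct_mulVec_add_mulVec_self hA,
    dotProduct_mulVec_add_mulVec_of_orthonormal hM hq hQMQ hQMq]

lemma gradPhi_dotProduct (hQMQ : Qᵀ * M * Q = 1) (hQMq : (Qᵀ * M) *ᵥ q = 0) (ρ : ℝ)
    (y v : Fin m → ℝ) :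
    gradPhi (Qᵀ * A * Q) ((Qᵀ * A) *ᵥ q) ρ y ⬝ᵥ v =
      2 / (y ⬝ᵥ y + 1) * ((Q *ᵥ v) ⬝ᵥ A *ᵥ (q + Q *ᵥ y) -
        phiAux (Qᵀ * A * Q) ((Qᵀ * A) *ᵥ q) ρ y * ((Q *ᵥ v) ⬝ᵥ M *ᵥ (q + Q *ᵥ y))) := by
  rw [mulVec_dotProduct_mulVec_add_of_orthonormal hQMQ hQMq, mulVec_add, dotProduct_add,
    ← dotProduct_transpose_mul_mulVec, ← dotProduct_transpose_mul_mul_mulVec, gradPhi,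
    smul_dotProduct, dotProduct_comm _ v, dotProduct_add, dotProduct_sub, dotProduct_smul,
    dotProduct_comm v y, smul_eq_mul, smul_eq_mul]
  ring

lemma two_mul_gradPhi_dotProduct_mul (hM : M.IsSymm) (hq : q ⬝ᵥ M *ᵥ q = 1)
    (hQMQ : Qᵀ * M * Q = 1) (hQMq : (Qᵀ * M) *ᵥ q = 0) (ρ : ℝ) (y v : Fin m → ℝ) {x z : Fin n → ℝ}
    (hx : x = q + Q *ᵥ y) (hz : z = Q *ᵥ v) :
    2 * ((gradPhi (Qᵀ * A * Q) ((Qᵀ * A) *ᵥ q) ρ y ⬝ᵥ v) * (y ⬝ᵥ v)) =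
      4 * ((z ⬝ᵥ A *ᵥ x - phiAux (Qᵀ * A * Q) ((Qᵀ * A) *ᵥ q) ρ y * (z ⬝ᵥ M *ᵥ x)) *
        (z ⬝ᵥ M *ᵥ x)) / (x ⬝ᵥ M *ᵥ x) := by
  subst hx hz
  rw [gradPhi_dotProduct hQMQ hQMq, dotProduct_mulVec_add_mulVec_of_orthonormal hM hq hQMQ hQMq,
    mulVec_dotProduct_mulVec_add_of_orthonormal hQMQ hQMq]
  ring

lemma abs_two_mul_gradPhi_dotProduct_mul_le (hA : A.IsSymm) (hM : M.PosSemidef)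
    (hq : q ⬝ᵥ M *ᵥ q = 1) (hQMQ : Qᵀ * M * Q = 1) (hQMq : (Qᵀ * M) *ᵥ q = 0) {u : Fin n → ℝ}
    {α β : ℝ} (hgap : HasSpectralGap A.toBilin' M.toBilin' u α β) (hα : 0 < α) (hαβ : α < β)
    (hρ : Rq A M q ≤ (α + β) / 2) {y : Fin m → ℝ}
    (hy : phiAux (Qᵀ * A * Q) ((Qᵀ * A) *ᵥ q) (Rq A M q) y ≤ Rq A M q) (v : Fin m → ℝ) :
    |2 * ((gradPhi (Qᵀ * A * Q) ((Qᵀ * A) *ᵥ q) (Rq A M q) y ⬝ᵥ v) * (y ⬝ᵥ v))| ≤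
      8 * (Rq A M q - α) / √(α * (β - α)) * (v ⬝ᵥ (Qᵀ * A * Q) *ᵥ v) := by
  have hM' : M.IsSymm := isHermitian_iff_isSymm.1 hM.isHermitian
  obtain ⟨x, hx⟩ : ∃ x, x = q + Q *ᵥ y := ⟨_, rfl⟩
  obtain ⟨z, hz⟩ : ∃ z, z = Q *ᵥ v := ⟨_, rfl⟩
  set f := phiAux (Qᵀ * A * Q) ((Qᵀ * A) *ᵥ q) (Rq A M q) y with hf
  have hxx : 0 < x ⬝ᵥ M *ᵥ x := by
    rw [hx, dotProduct_mulVec_add_mulVec_of_orthonormal hM' hq hQMQ hQMq]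
    linarith [show 0 ≤ y ⬝ᵥ y by simpa using dotProduct_star_self_nonneg y]
  have hxA : x ⬝ᵥ A *ᵥ x = f * (x ⬝ᵥ M *ᵥ x) := by
    rw [hf, phiAux_eq_Rq hA hM' hq hQMQ hQMq, ← hx, Rq, div_mul_cancel₀ _ hxx.ne']
  have hqz : q ⬝ᵥ M *ᵥ z = 0 := by
    rw [dotProduct_mulVec_comm_of_isSymm hM', hz, mulVec_dotProduct_mulVec_eq_zero hQMq]
  have hcore : |(z ⬝ᵥ A *ᵥ x - f * (z ⬝ᵥ M *ᵥ x)) * (z ⬝ᵥ M *ᵥ x)| ≤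
      2 * (Rq A M q - α) / √(α * (β - α)) * ((z ⬝ᵥ A *ᵥ z) * (x ⬝ᵥ M *ᵥ x)) := by
    simp only [← Matrix.toBilin'_apply'] at hq hqz hxA hxx ⊢
    exact hgap.abs_residual_mul_apply_le (Matrix.isSymm_toBilin'_iff_isSymm.2 hA)
      (isPosSemidef_toBilin' hM) hα hαβ hρ hq (by simp [Rq, ← Matrix.toBilin'_apply', hq]) hqz hxA
      hxx hy
  rw [two_mul_gradPhi_dotProduct_mul hM' hq hQMQ hQMq _ y v hx hz, abs_div, abs_mul,
    abs_of_pos hxx, div_le_iff₀ hxx, abs_of_pos four_pos, dotProduct_transpose_mul_mul_mulVec, ← hz]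
  linear_combination 4 * hcore

lemma Rq_smul {c : ℝ} (hc : c ≠ 0) (x : Fin n → ℝ) : Rq A M (c • x) = Rq A M x := by
  simp only [Rq, mulVec_smul, dotProduct_smul, smul_dotProduct, smul_eq_mul]
  rw [mul_div_mul_left _ _ hc, mul_div_mul_left _ _ hc]

end Chart

section CompleteChart

variable {m : ℕ} {A M : Matrix (Fin (m + 1)) (Fin (m + 1)) ℝ} {q : Fin (m + 1) → ℝ}
  {Q : Matrix (Fin (m + 1)) (Fin m) ℝ}

lemma smul_add_mulVec_eq_self (hM : M.IsSymm) (hq : q ⬝ᵥ M *ᵥ q = 1) (hQMQ : Qᵀ * M * Q = 1)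
    (hQMq : (Qᵀ * M) *ᵥ q = 0) (x : Fin (m + 1) → ℝ) :
    (q ⬝ᵥ M *ᵥ x) • q + Q *ᵥ ((Qᵀ * M) *ᵥ x) = x := by
  have hcol (j : Fin m) (w : Fin (m + 1) → ℝ) : Q.col j ⬝ᵥ M *ᵥ w = ((Qᵀ * M) *ᵥ w) j := by
    rw [← mulVec_mulVec]
    rfl
  let e (k : Option (Fin m)) : Fin (m + 1) → ℝ := k.elim q Q.col
  have horth (i j : Option (Fin m)) : e i ⬝ᵥ M *ᵥ e j = if i = j then 1 else 0 := by
    rcases i with _ | i <;> rcases j with _ | j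
    · simpa [e] using hq
    · simp [e, dotProduct_mulVec_comm_of_isSymm hM q, hcol, hQMq]
    · simp [e, hcol, hQMq]
    · simp only [e, Option.elim_some, hcol, Option.some.injEq, ← one_apply, ← hQMQ]
      rfl
  have hexp := sum_dotProduct_mulVec_smul_eq_self (by simp) horth x
  simp only [Fintype.sum_option, e, Option.elim_none, Option.elim_some, hcol] at hexp
  simp only [mulVec_eq_sum _ Q, op_smul_eq_smul]
  exact hexp

lemma add_mulVec_psiMap (hM : M.IsSymm) (hq : q ⬝ᵥ M *ᵥ q = 1) (hQMQ : Qᵀ * M * Q = 1)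
    (hQMq : (Qᵀ * M) *ᵥ q = 0) {x : Fin (m + 1) → ℝ} (hx : q ⬝ᵥ M *ᵥ x ≠ 0) :
    q + Q *ᵥ psiMap M q Q x = (q ⬝ᵥ M *ᵥ x)⁻¹ • x := by
  conv_rhs => enter [2]; rw [← smul_add_mulVec_eq_self hM hq hQMQ hQMq x]
  rw [psiMap, mulVec_smul, smul_add, inv_smul_smul₀ hx]

lemma phiAux_le_of_mem_image_psiMap (hA : A.IsSymm) (hM : M.IsSymm) (hq : q ⬝ᵥ M *ᵥ q = 1)
    (hQMQ : Qᵀ * M * Q = 1) (hQMq : (Qᵀ * M) *ᵥ q = 0) {y : Fin m → ℝ}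
    (hy : y ∈ psiMap M q Q '' Xset A M q) :
    phiAux (Qᵀ * A * Q) ((Qᵀ * A) *ᵥ q) (Rq A M q) y ≤ Rq A M q := by
  obtain ⟨x, ⟨⟨-, hqx⟩, hRq⟩, rfl⟩ := hy
  rwa [phiAux_eq_Rq hA hM hq hQMQ hQMq, add_mulVec_psiMap hM hq hQMQ hQMq hqx.ne',
    Rq_smul (inv_ne_zero hqx.ne')]

end CompleteChart

theorem stmt_9_general {n m : ℕ} {A M : Matrix (Fin n) (Fin n) ℝ} (hA : A.IsSymm)
    (hM : M.PosSemidef) {q : Fin n → ℝ} {Q : Matrix (Fin n) (Fin m) ℝ} (hq : q ⬝ᵥ M *ᵥ q = 1)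
    (hQMQ : Qᵀ * M * Q = 1) (hQMq : (Qᵀ * M) *ᵥ q = 0) {u : Fin n → ℝ} {α β χ : ℝ}
    (hgap : HasSpectralGap A.toBilin' M.toBilin' u α β) (hα : 0 < α) (hαβ : α < β)
    {B : Matrix (Fin m) (Fin m) ℝ} (hB : B = Qᵀ * A * Q) {b : Fin m → ℝ}
    (hb : b = (Qᵀ * A) *ᵥ q) {ρ : ℝ} (hρq : ρ = Rq A M q) (hρ : ρ ≤ (α + β) / 2)
    (hχ : 8 * (ρ - α) / √(α * (β - α)) ≤ χ) {y : Fin m → ℝ} (hy : phiAux B b ρ y ≤ ρ) :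
    ((vecMulVec (gradPhi B b ρ y) y + vecMulVec y (gradPhi B b ρ y)) - (-χ) • B).PosSemidef ∧
      (χ • B - (vecMulVec (gradPhi B b ρ y) y + vecMulVec y (gradPhi B b ρ y))).PosSemidef := by
  subst hB hb hρq
  have hBsymm : (Qᵀ * A * Q).IsSymm := by
    rw [IsSymm, transpose_mul, transpose_mul, hA.eq, transpose_transpose, Matrix.mul_assoc]
  refine posSemidef_vecMulVec_add_vecMulVec_bounds hBsymm fun v => ?_
  have hvBv : 0 ≤ v ⬝ᵥ (Qᵀ * A * Q) *ᵥ v := by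
    rw [dotProduct_transpose_mul_mul_mulVec, ← Matrix.toBilin'_apply']
    exact (mul_nonneg hα.le ((isPosSemidef_toBilin' hM).nonneg _)).trans
      (hgap.mul_apply_self_le (Matrix.isSymm_toBilin'_iff_isSymm.2 hA) (isPosSemidef_toBilin' hM)
        hαβ.le _)
  exact (abs_two_mul_gradPhi_dotProduct_mul_le hA hM hq hQMQ hQMq hgap hα hαβ hρ hy v).trans
    (mul_le_mul_of_nonneg_right hχ hvBv)

/-- Under λ₁ ≤ ρ_q < (λ₁+λ₂)/2, for any y ∈ Y:
−χ_g B ⪯ ∇φ(y)yᵀ + y(∇φ(y))ᵀ ⪯ χ_g B,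
where χ_g = (8(ρ_q−λ₁)/λ₁)·((λ₁+λ₂)/(2(λ₂−λ₁)))^{1/2}. -/
theorem stmt_9 (n : ℕ)
    (A M : Matrix (Fin (n+2)) (Fin (n+2)) ℝ)
    (hA : A.PosDef) (hM : M.PosDef)
    (q : Fin (n+2) → ℝ) (Q : Matrix (Fin (n+2)) (Fin (n+1)) ℝ)
    (hq1 : q ⬝ᵥ (M *ᵥ q) = 1)
    (hQMQ : Qᵀ * M * Q = 1)
    (hQMq : (Qᵀ * M) *ᵥ q = 0)
    (lam : Fin (n+2) → ℝ) (u : Fin (n+2) → Fin (n+2) → ℝ)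
    (hlam0 : 0 < lam 0) (hlam01 : lam 0 < lam 1) (hmono : Monotone lam)
    (heig : ∀ i, A *ᵥ u i = lam i • (M *ᵥ u i))
    (horth : ∀ i j, u i ⬝ᵥ (M *ᵥ u j) = if i = j then (1:ℝ) else 0)
    (hqu1 : 0 < q ⬝ᵥ (M *ᵥ u 0))
    (B : Matrix (Fin (n+1)) (Fin (n+1)) ℝ) (hB : B = Qᵀ * A * Q)
    (b : Fin (n+1) → ℝ) (hb : b = (Qᵀ * A) *ᵥ q)
    (ρq : ℝ) (hρq : ρq = Rq A M q)
    (hρ1 : lam 0 ≤ ρq) (hρ2 : ρq < (lam 0 + lam 1) / 2)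
    (χg : ℝ)
    (hχg : χg = (8 * (ρq - lam 0) / lam 0) *
      Real.sqrt ((lam 0 + lam 1) / (2 * (lam 1 - lam 0)))) :
    ∀ y ∈ psiMap M q Q '' (Xset A M q),
      ((vecMulVec (gradPhi B b ρq y) y + vecMulVec y (gradPhi B b ρq y)) -
        (-χg) • B).PosSemidef ∧
      (χg • B -
        (vecMulVec (gradPhi B b ρq y) y + vecMulVec y (gradPhi B b ρq y))).PosSemidef := by
  intro y hy
  have hA' : A.IsSymm := isHermitian_iff_isSymm.1 hA.isHermitian
  have hM' : M.IsSymm := isHermitian_iff_isSymm.1 hM.isHermitian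
  have hgap : HasSpectralGap A.toBilin' M.toBilin' (u 0) (lam 0) (lam 1) :=
    hasSpectralGap_toBilin' hA' hM' heig horth fun i hi => hmono (Fin.one_le_of_ne_zero hi)
  subst hB hb hρq hχg
  exact stmt_9_general hA' hM.posSemidef hq1 hQMQ hQMq hgap hlam0 hlam01 rfl rfl rfl hρ2.le
    (div_sqrt_mul_sub_le hlam0 hlam01 (by linarith))
    (phiAux_le_of_mem_image_psiMap hA' hM' hq1 hQMQ hQMq hy)
end

section
/- Let φ be a differentiable function on ℝ^m that is (μ,L)-strongly convex on a convex set 𝒴, let y* ∈ 𝒴 satisfy ∇φ(y*) = 0, and let 0 < τ ≤ (μ/L)^{1/2}. Suppose sequences (y_k), (ȳ_k), (s_k) satisfy the corrected semi-implicit recursions (ȳ_k − y_k)/τ = s_k − ȳ_k, (s_{k+1} − s_k)/τ = (ȳ_k − s_k) − (1/μ)∇φ(ȳ_k), and φ(y_{k+1}) ≤ φ(ȳ_k) − (1/(2L))‖∇φ(ȳ_k)‖², and that all iterates ȳ_k, y_k, s_k lie in 𝒴. Then the discrete Lyapunov function ℒ_k = φ(y_k) − φ(y*) + (μ/2)‖s_k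 − y*‖² satisfies ℒ_{k+1} ≤ (1 − τ)ℒ_k for all k ≥ 0. -/
open RealInnerProductSpace

/-!
Let primes denote the next iterate, let `g` be the gradient at `ybar` and put
`w = (1 - τ) • (s - ystar) + τ • (ybar - ystar)`. The `s`-recursion reads
`s' - ystar = w - (τ / μ) • g`, and the `ybar`-recursion gives
`τ • w = (1 - τ) • (ybar - y) + τ • (ybar - ystar)`, so the cross term `⟪g, τ • w⟫` obtained by
expanding `μ / 2 * ‖s' - ystar‖ ^ 2` is controlled by two first-order convexity inequalities at
`ybar`. The only term left over is `τ ^ 2 / (2 * μ) * ‖g‖ ^ 2`, and as `τ ^ 2 ≤ μ / L` the gradient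
step that produces `y'` decreases `φ` by at least that much.
-/

section StepSize

variable {a τ : ℝ}

theorem sq_le_inv_of_le_rpow_neg_half (ha : 0 ≤ a) (hτ : 0 ≤ τ)
    (h : τ ≤ a ^ (-(1 / 2 : ℝ))) : τ ^ 2 ≤ a⁻¹ := by
  rw [Real.rpow_neg ha, ← Real.sqrt_eq_rpow, ← Real.sqrt_inv] at h
  exact (Real.le_sqrt hτ (inv_nonneg.2 ha)).1 h

theorem le_one_of_le_rpow_neg_half (ha : 1 ≤ a) (h : τ ≤ a ^ (-(1 / 2 : ℝ))) : τ ≤ 1 :=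
  h.trans (Real.rpow_le_one_of_one_le_of_nonpos ha (by norm_num))

end StepSize

theorem norm_sq_convex_combination_le {V : Type*} [SeminormedAddCommGroup V] [NormedSpace ℝ V]
    {t : ℝ} (ht₀ : 0 ≤ t) (ht₁ : t ≤ 1) (u v : V) :
    ‖(1 - t) • u + t • v‖ ^ 2 ≤ (1 - t) * ‖u‖ ^ 2 + t * ‖v‖ ^ 2 :=
  (convexOn_univ_norm.pow (fun _ _ ↦ norm_nonneg _) 2).2 (Set.mem_univ u) (Set.mem_univ v)
    (sub_nonneg.2 ht₁) ht₀ (sub_add_cancel 1 t)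

variable {E : Type*} [NormedAddCommGroup E] [InnerProductSpace ℝ E]

/-- `g` is a `μ`-strong subgradient of `φ` at `x` relative to the set `Y`: on `Y`, the function `φ`
lies above the quadratic of curvature `μ` that has value `φ x` and gradient `g` at `x`. This is
the lower half of strong convexity, required at a single point. -/
def IsStrongSubgradientAt (μ : ℝ) (φ : E → ℝ) (Y : Set E) (x g : E) : Prop :=
  ∀ z ∈ Y, φ x + ⟪g, z - x⟫ + μ / 2 * ‖z - x‖ ^ 2 ≤ φ z

/-- The discrete Lyapunov function `φ y - φ p + μ / 2 * ‖s - p‖ ^ 2` of the state `(y, s)`, measured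
against a reference point `p`. -/
noncomputable def lyapunov (μ : ℝ) (φ : E → ℝ) (p y s : E) : ℝ :=
  φ y - φ p + μ / 2 * ‖s - p‖ ^ 2

section Step

variable {φ : E → ℝ} {Y : Set E} {μ τ : ℝ} {p x y y' s s' g : E}

namespace IsStrongSubgradientAt

theorem sub_add_le_inner (hg : IsStrongSubgradientAt μ φ Y x g) (hp : p ∈ Y) :
    φ x - φ p + μ / 2 * ‖x - p‖ ^ 2 ≤ ⟪g, x - p⟫ := by
  have h := hg p hp
  rw [← neg_sub x p, inner_neg_right, norm_neg] at h
  linarith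

theorem sub_le_inner (hg : IsStrongSubgradientAt μ φ Y x g) (hμ : 0 ≤ μ) (hy : y ∈ Y) :
    φ x - φ y ≤ ⟪g, x - y⟫ :=
  (le_add_of_nonneg_right (by positivity)).trans (hg.sub_add_le_inner hy)

theorem le_inner_convex_combination (hg : IsStrongSubgradientAt μ φ Y x g) (hμ : 0 ≤ μ)
    (hτ₀ : 0 ≤ τ) (hτ₁ : τ ≤ 1) (hy : y ∈ Y) (hp : p ∈ Y) :
    (1 - τ) * (φ x - φ y) + τ * (φ x - φ p + μ / 2 * ‖x - p‖ ^ 2) ≤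
      ⟪g, (1 - τ) • (x - y) + τ • (x - p)⟫ := by
  rw [inner_add_right, real_inner_smul_right, real_inner_smul_right]
  exact add_le_add
    (mul_le_mul_of_nonneg_left (hg.sub_le_inner hμ hy) (sub_nonneg.2 hτ₁))
    (mul_le_mul_of_nonneg_left (hg.sub_add_le_inner hp) hτ₀)

end IsStrongSubgradientAt

theorem half_mul_norm_sub_smul_sq (hμ : μ ≠ 0) (w g : E) :
    μ / 2 * ‖w - (τ / μ) • g‖ ^ 2 =
      μ / 2 * ‖w‖ ^ 2 - ⟪g, τ • w⟫ + τ ^ 2 / (2 * μ) * ‖g‖ ^ 2 := by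
  rw [norm_sub_sq_real, norm_smul, mul_pow, Real.norm_eq_abs, sq_abs, real_inner_smul_right,
    real_inner_smul_right, real_inner_comm]
  field_simp

theorem half_mul_norm_sub_sq_le_of_semiImplicit_step (hμ : 0 < μ) (hτ₀ : 0 ≤ τ) (hτ₁ : τ ≤ 1)
    (hg : IsStrongSubgradientAt μ φ Y x g) (hy : y ∈ Y) (hp : p ∈ Y)
    (hx : x - y = τ • (s - x)) (hs' : s' - s = τ • ((x - s) - μ⁻¹ • g)) :
    μ / 2 * ‖s' - p‖ ^ 2 ≤
      (1 - τ) * lyapunov μ φ p y s - (φ x - φ p) + τ ^ 2 / (2 * μ) * ‖g‖ ^ 2 := by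
  set w := (1 - τ) • (s - p) + τ • (x - p)
  have hs'_eq : s' - p = w - (τ / μ) • g := by
    rw [eq_add_of_sub_eq hs']
    module
  have hw_smul : τ • w = (1 - τ) • (x - y) + τ • (x - p) := by
    rw [hx]
    module
  have hw_norm : ‖w‖ ^ 2 ≤ (1 - τ) * ‖s - p‖ ^ 2 + τ * ‖x - p‖ ^ 2 :=
    norm_sq_convex_combination_le hτ₀ hτ₁ _ _
  have hcross := hg.le_inner_convex_combination hμ.le hτ₀ hτ₁ hy hp
  calc μ / 2 * ‖s' - p‖ ^ 2
      = μ / 2 * ‖w‖ ^ 2 - ⟪g, (1 - τ) • (x - y) + τ • (x - p)⟫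
          + τ ^ 2 / (2 * μ) * ‖g‖ ^ 2 := by
        rw [hs'_eq, half_mul_norm_sub_smul_sq hμ.ne', hw_smul]
    _ ≤ μ / 2 * ((1 - τ) * ‖s - p‖ ^ 2 + τ * ‖x - p‖ ^ 2)
          - ((1 - τ) * (φ x - φ y) + τ * (φ x - φ p + μ / 2 * ‖x - p‖ ^ 2))
          + τ ^ 2 / (2 * μ) * ‖g‖ ^ 2 := by
        gcongr
    _ = (1 - τ) * lyapunov μ φ p y s - (φ x - φ p) + τ ^ 2 / (2 * μ) * ‖g‖ ^ 2 := by
        rw [lyapunov]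
        ring

theorem lyapunov_le_of_corrected_semiImplicit_step (hμ : 0 < μ) (hτ₀ : 0 ≤ τ) (hτ₁ : τ ≤ 1)
    (hg : IsStrongSubgradientAt μ φ Y x g) (hy : y ∈ Y) (hp : p ∈ Y)
    (hx : x - y = τ • (s - x)) (hs' : s' - s = τ • ((x - s) - μ⁻¹ • g))
    (hy' : φ y' ≤ φ x - τ ^ 2 / (2 * μ) * ‖g‖ ^ 2) :
    lyapunov μ φ p y' s' ≤ (1 - τ) * lyapunov μ φ p y s := by
  have hs_le := half_mul_norm_sub_sq_le_of_semiImplicit_step hμ hτ₀ hτ₁ hg hy hp hx hs'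
  rw [lyapunov]
  linarith

end Step

theorem stmt_12_general {φ : E → ℝ} {Y : Set E} {μ L τ : ℝ} (hμ : 0 < μ) (hμL : μ ≤ L)
    (hτ₀ : 0 < τ) (hτ : τ ≤ (L / μ) ^ (-(1 / 2 : ℝ)))
    {p : E} (hp : p ∈ Y) {y ybar s g : ℕ → E} (hy : ∀ k, y k ∈ Y)
    (hg : ∀ k, IsStrongSubgradientAt μ φ Y (ybar k) (g k))
    (hybar : ∀ k, τ⁻¹ • (ybar k - y k) = s k - ybar k)
    (hs : ∀ k, τ⁻¹ • (s (k + 1) - s k) = (ybar k - s k) - μ⁻¹ • g k)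
    (hdescent : ∀ k, φ (y (k + 1)) ≤ φ (ybar k) - 1 / (2 * L) * ‖g k‖ ^ 2) (k : ℕ) :
    lyapunov μ φ p (y (k + 1)) (s (k + 1)) ≤ (1 - τ) * lyapunov μ φ p (y k) (s k) := by
  have hL : 0 < L := hμ.trans_le hμL
  have hτ₁ : τ ≤ 1 := le_one_of_le_rpow_neg_half ((one_le_div hμ).2 hμL) hτ
  have hτ_sq : τ ^ 2 ≤ μ / L := by
    simpa only [inv_div] using sq_le_inv_of_le_rpow_neg_half (div_pos hL hμ).le hτ₀.le hτ
  have hcoeff : τ ^ 2 / (2 * μ) ≤ 1 / (2 * L) :=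
    calc τ ^ 2 / (2 * μ) ≤ μ / L / (2 * μ) := by gcongr
      _ = 1 / (2 * L) := by field_simp
  refine lyapunov_le_of_corrected_semiImplicit_step hμ hτ₀.le hτ₁ (hg k) (hy k) hp
    ((inv_smul_eq_iff₀ hτ₀.ne').1 (hybar k)) ((inv_smul_eq_iff₀ hτ₀.ne').1 (hs k)) ?_
  exact (hdescent k).trans (by gcongr)

/-- Convergence of the corrected semi-implicit scheme: with φ (μ,L)-strongly convex
on 𝒴, ∇φ(y*) = 0, 0 < τ ≤ κ^{−1/2}, the recursions and the containment of all
iterates in 𝒴 imply ℒ_{k+1} ≤ (1 − τ)ℒ_k. -/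
theorem stmt_12 (m : ℕ) (hm : 0 < m)
    (φ : EuclideanSpace ℝ (Fin m) → ℝ) (hφ : Differentiable ℝ φ)
    (Y : Set (EuclideanSpace ℝ (Fin m))) (hY : Convex ℝ Y)
    (μ L : ℝ) (hμ : 0 < μ) (hμL : μ ≤ L)
    (hconv : ∀ y₁ ∈ Y, ∀ y₂ ∈ Y,
      μ / 2 * ‖y₁ - y₂‖ ^ 2 ≤ φ y₁ - φ y₂ - ⟪gradient φ y₂, y₁ - y₂⟫ ∧
      φ y₁ - φ y₂ - ⟪gradient φ y₂, y₁ - y₂⟫ ≤ L / 2 * ‖y₁ - y₂‖ ^ 2)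
    (ystar : EuclideanSpace ℝ (Fin m)) (hystar : ystar ∈ Y)
    (hgrad0 : gradient φ ystar = 0)
    (τ : ℝ) (hτ0 : 0 < τ) (hτ : τ ≤ (L / μ) ^ (-(1/2 : ℝ)))
    (y ybar s : ℕ → EuclideanSpace ℝ (Fin m))
    (hrec1 : ∀ k, τ⁻¹ • (ybar k - y k) = s k - ybar k)
    (hrec2 : ∀ k, τ⁻¹ • (s (k+1) - s k) = (ybar k - s k) - μ⁻¹ • gradient φ (ybar k))
    (hrec3 : ∀ k, φ (y (k+1)) ≤ φ (ybar k) - 1 / (2 * L) * ‖gradient φ (ybar k)‖ ^ 2)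
    (hmem : ∀ k, y k ∈ Y ∧ ybar k ∈ Y ∧ s k ∈ Y) :
    ∀ k, φ (y (k+1)) - φ ystar + μ / 2 * ‖s (k+1) - ystar‖ ^ 2 ≤
      (1 - τ) * (φ (y k) - φ ystar + μ / 2 * ‖s k - ystar‖ ^ 2) :=
  stmt_12_general hμ hμL hτ0 hτ hystar (fun k ↦ (hmem k).1)
    (fun k z hz ↦ by linarith [(hconv z hz (ybar k) (hmem k).2.1).1]) hrec1 hrec2 hrec3
end

section
/- Let φ : ℝ^m → ℝ be differentiable, (μ,L)-strongly convex on a convex set 𝒴, with unique minimizer y* ∈ 𝒴 and ∇φ(y*) = 0, and assume the gradient bounds μ‖y₁−y₂‖ ≤ ‖∇φ(y₁)−∇φ(y₂)‖ ≤ L‖y₁−y₂‖ hold for y₁,y₂ ∈ 𝒴. Set κ = L/μ and let 0 < τ ≤ κ^{−1/2}. Suppose the initials satisfy s₀ ∈ B_{R₁} and {y : φ(y) ≤ φ(y₀)} ⊆ B_{R₁} ⊆ B_{R₂} ⊆ 𝒴, where B_R = {y : ‖y − y*‖ ≤ R}, R₁ = (2ℒ₀/μ)^{1/2}, R₂ =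 max{2R₁, (1+τκ)R₁}, and ℒ₀ = φ(y₀) − φ(y*) + (μ/2)‖s₀ − y*‖². Generate iterates by the LONAG recursions: ȳ_k = (y_k + τ s_k)/(1+τ), s_{k+1} = (1−τ)s_k + τ ȳ_k − (τ/μ)∇φ(ȳ_k), and y_{k+1} a minimizer of φ over span{y_k, ȳ_k, ∇φ(ȳ_k)}. Then for all k ≥ 0: (a) ȳ_k ∈ B_{R₁} and y_{k+1} ∈ B_{R₁}; (b) φ(y_{k+1}) ≤ φ(ȳ_k) − (1/(2L))‖∇φ(ȳ_k)‖²; (c) ℒ_{k+1} ≤ (1−τ)ℒ_k, where ℒ_k = φ(y_k) − φ(y*) + (μ/2)‖s_k − y*‖²; and (d) s_{k+1} ∈ B_{R₁}. -/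
open RealInnerProductSpace

/-! Since `y - ȳ = τ (ȳ - s)`, expanding `‖s' - x‖²` around the minimizer `x` produces exactly the
inner products that occur in the two convexity inequalities from `ȳ` towards `y` and towards `x`.
Averaging these with weights `1 - τ` and `τ` cancels every inner product, and the remaining
`τ² / (2 μ) ‖∇φ(ȳ)‖²` is paid for by the descent of a gradient step of length `1 / L`.
The bounds on `φ` hold only on `Y`, so the gradient step from `ȳ` must stay in `Y`: testing the
upper quadratic bound along `-∇φ(ȳ)` at distance `‖ȳ - x‖` yields `‖∇φ(ȳ)‖ ≤ L ‖ȳ - x‖`, hence the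
step is no longer than `‖ȳ - x‖`. -/

section QuadraticBounds

open Metric

variable {E : Type*} [NormedAddCommGroup E] [InnerProductSpace ℝ E]
  {φ : E → ℝ} {g : E → E} {Y : Set E} {μ L : ℝ} {x y : E}

/-- First-order form of `μ`-strong convexity of `φ` on `Y`, with the vector field `g` in the role
of the gradient. -/
def QuadraticLowerBoundOn (φ : E → ℝ) (g : E → E) (μ : ℝ) (Y : Set E) : Prop :=
  ∀ v ∈ Y, ∀ w ∈ Y, μ / 2 * ‖v - w‖ ^ 2 ≤ φ v - φ w - ⟪g w, v - w⟫

/-- First-order form of `L`-smoothness of `φ` on `Y`, with the vector field `g` in the role of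
the gradient. -/
def QuadraticUpperBoundOn (φ : E → ℝ) (g : E → E) (L : ℝ) (Y : Set E) : Prop :=
  ∀ v ∈ Y, ∀ w ∈ Y, φ v - φ w - ⟪g w, v - w⟫ ≤ L / 2 * ‖v - w‖ ^ 2

theorem QuadraticLowerBoundOn.isMinOn (h : QuadraticLowerBoundOn φ g μ Y) (hμ : 0 ≤ μ)
    (hx : x ∈ Y) (hgx : g x = 0) : IsMinOn φ Y x := by
  refine isMinOn_iff.2 fun v hv => ?_
  have hquad := h v hv x hx
  rw [hgx, inner_zero_left, sub_zero] at hquad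
  exact sub_nonneg.1 (le_trans (by positivity) hquad)

theorem QuadraticUpperBoundOn.sub_smul_le (h : QuadraticUpperBoundOn φ g L Y) {t : ℝ}
    (hy : y ∈ Y) (hstep : y - t • g y ∈ Y) :
    φ (y - t • g y) ≤ φ y - t * ‖g y‖ ^ 2 + L / 2 * (t * ‖g y‖) ^ 2 := by
  have hquad := h _ hstep y hy
  rw [sub_sub_cancel_left, inner_neg_right, norm_neg, real_inner_smul_right,
    real_inner_self_eq_norm_sq, norm_smul, mul_pow, Real.norm_eq_abs, sq_abs, ← mul_pow] at hquad
  linarith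

theorem QuadraticUpperBoundOn.norm_le_mul_norm_sub (h : QuadraticUpperBoundOn φ g L Y)
    (hL : 0 ≤ L) (hmin : IsMinOn φ Y x) (hgx : g x = 0) (hball : closedBall y ‖y - x‖ ⊆ Y) :
    ‖g y‖ ≤ L * ‖y - x‖ := by
  rcases eq_or_ne (g y) 0 with hgy | hgy
  · rw [hgy, norm_zero]
    positivity
  have hgy_pos : 0 < ‖g y‖ := norm_pos_iff.2 hgy
  have hr : 0 < ‖y - x‖ := norm_pos_iff.2 (sub_ne_zero.2 fun hyx => hgy (hyx ▸ hgx))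
  have hy : y ∈ Y := hball (mem_closedBall_self hr.le)
  have hx : x ∈ Y := hball (by rw [mem_closedBall_iff_norm, norm_sub_rev])
  set t := ‖y - x‖ / ‖g y‖
  have ht_mul : t * ‖g y‖ = ‖y - x‖ := div_mul_cancel₀ _ hgy_pos.ne'
  have hstep : y - t • g y ∈ Y := hball <| by
    rw [mem_closedBall_iff_norm, sub_sub_cancel_left, norm_neg, norm_smul,
      Real.norm_of_nonneg (by positivity), ht_mul]
  have hdescent : φ x ≤ φ y - ‖y - x‖ * ‖g y‖ + L / 2 * ‖y - x‖ ^ 2 := by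
    have hle := (isMinOn_iff.1 hmin _ hstep).trans (h.sub_smul_le hy hstep)
    rwa [sq ‖g y‖, ← mul_assoc, ht_mul] at hle
  have hgap : φ y - φ x ≤ L / 2 * ‖y - x‖ ^ 2 := by
    simpa only [hgx, inner_zero_left, sub_zero] using h y hy x hx
  refine le_of_mul_le_mul_left ?_ hr
  linarith

theorem QuadraticUpperBoundOn.gradientStep_le (h : QuadraticUpperBoundOn φ g L Y) (hL : 0 < L)
    (hmin : IsMinOn φ Y x) (hgx : g x = 0) (hball : closedBall y ‖y - x‖ ⊆ Y) :
    φ (y - L⁻¹ • g y) ≤ φ y - 1 / (2 * L) * ‖g y‖ ^ 2 := by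
  have hy : y ∈ Y := hball (mem_closedBall_self (norm_nonneg _))
  have hstep : y - L⁻¹ • g y ∈ Y := hball <| by
    rw [mem_closedBall_iff_norm, sub_sub_cancel_left, norm_neg, norm_smul,
      Real.norm_of_nonneg (by positivity), inv_mul_le_iff₀ hL]
    exact h.norm_le_mul_norm_sub hL.le hmin hgx hball
  calc φ (y - L⁻¹ • g y)
      ≤ φ y - L⁻¹ * ‖g y‖ ^ 2 + L / 2 * (L⁻¹ * ‖g y‖) ^ 2 := h.sub_smul_le hy hstep
    _ = φ y - 1 / (2 * L) * ‖g y‖ ^ 2 := by field_simp; ring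

end QuadraticBounds

section Energy

open Metric

variable {E : Type*} [NormedAddCommGroup E] {φ : E → ℝ} {μ L τ : ℝ} {x y s : E}

/-- The Lyapunov function `ℒ` of the method relative to the minimizer `x`, as a function of the
main iterate `y` and the auxiliary iterate `s`. -/
noncomputable def lonagEnergy (φ : E → ℝ) (μ : ℝ) (x y s : E) : ℝ :=
  φ y - φ x + μ / 2 * ‖s - x‖ ^ 2

theorem lonagEnergy_nonneg (hμ : 0 ≤ μ) (hy : φ x ≤ φ y) : 0 ≤ lonagEnergy φ μ x y s :=
  add_nonneg (sub_nonneg.2 hy) (by positivity)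

theorem mem_closedBall_of_lonagEnergy_le {e : ℝ} (hμ : 0 < μ) (hy : φ x ≤ φ y)
    (he : lonagEnergy φ μ x y s ≤ e) : s ∈ closedBall x √(2 * e / μ) := by
  rw [mem_closedBall_iff_norm]
  refine Real.le_sqrt_of_sq_le ((le_div_iff₀ hμ).2 ?_)
  unfold lonagEnergy at he
  linarith

variable [InnerProductSpace ℝ E]

theorem norm_sq_convexCombination_sub_smul (u w d : E) (t c : ℝ) :
    ‖(1 - t) • u + t • w - c • d‖ ^ 2 =
      (1 - t) * ‖u‖ ^ 2 + t * ‖w‖ ^ 2 - t * (1 - t) * ‖u - w‖ ^ 2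
        - 2 * c * ((1 - t) * ⟪d, u⟫ + t * ⟪d, w⟫) + c ^ 2 * ‖d‖ ^ 2 := by
  simp only [← real_inner_self_eq_norm_sq, inner_sub_left, inner_sub_right, inner_add_left,
    inner_add_right, real_inner_smul_left, real_inner_smul_right]
  rw [real_inner_comm u d, real_inner_comm w d, real_inner_comm u w]
  ring

theorem half_mul_norm_sq_mirrorStep_le (hμ : 0 < μ) (hτ0 : 0 ≤ τ) (hτ1 : τ ≤ 1) (u w d : E) :
    μ / 2 * ‖(1 - τ) • u + τ • w - (τ / μ) • d‖ ^ 2 ≤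
      μ / 2 * ((1 - τ) * ‖u‖ ^ 2 + τ * ‖w‖ ^ 2)
        - τ * ((1 - τ) * ⟪d, u⟫ + τ * ⟪d, w⟫) + τ ^ 2 / (2 * μ) * ‖d‖ ^ 2 := by
  have hvariance : 0 ≤ μ / 2 * (τ * (1 - τ) * ‖u - w‖ ^ 2) := by
    have := sub_nonneg.2 hτ1
    positivity
  have hexpand : μ / 2 * ‖(1 - τ) • u + τ • w - (τ / μ) • d‖ ^ 2 =
      μ / 2 * ((1 - τ) * ‖u‖ ^ 2 + τ * ‖w‖ ^ 2 - τ * (1 - τ) * ‖u - w‖ ^ 2)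
        - τ * ((1 - τ) * ⟪d, u⟫ + τ * ⟪d, w⟫) + τ ^ 2 / (2 * μ) * ‖d‖ ^ 2 := by
    rw [norm_sq_convexCombination_sub_smul]
    field_simp
  linarith

theorem lonagEnergy_step_le {ybar y' s' d : E} (hμ : 0 < μ) (hL : 0 < L) (hτ0 : 0 ≤ τ)
    (hτ1 : τ ≤ 1) (hτL : τ ^ 2 * L ≤ μ) (hybar : ybar = (1 + τ)⁻¹ • (y + τ • s))
    (hs' : s' = (1 - τ) • s + τ • ybar - (τ / μ) • d)
    (hconv_y : 0 ≤ φ y - φ ybar - ⟪d, y - ybar⟫)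
    (hconv_x : μ / 2 * ‖x - ybar‖ ^ 2 ≤ φ x - φ ybar - ⟪d, x - ybar⟫)
    (hdescent : φ y' ≤ φ ybar - 1 / (2 * L) * ‖d‖ ^ 2) :
    lonagEnergy φ μ x y' s' ≤ (1 - τ) * lonagEnergy φ μ x y s := by
  have hs'_sub : s' - x = (1 - τ) • (s - x) + τ • (ybar - x) - (τ / μ) • d := by
    rw [hs']
    module
  have hy_sub : y - ybar = τ • ((ybar - x) - (s - x)) := by
    have hy : y = (1 + τ) • ybar - τ • s := by
      rw [hybar, smul_inv_smul₀ (by positivity), add_sub_cancel_right]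
    rw [hy]
    module
  have hexpand := half_mul_norm_sq_mirrorStep_le hμ hτ0 hτ1 (s - x) (ybar - x) d
  have hgradient : τ ^ 2 / (2 * μ) * ‖d‖ ^ 2 ≤ 1 / (2 * L) * ‖d‖ ^ 2 := by
    refine mul_le_mul_of_nonneg_right ?_ (sq_nonneg _)
    rw [div_le_div_iff₀ (by positivity) (by positivity)]
    linarith
  rw [hy_sub, real_inner_smul_right, inner_sub_right] at hconv_y
  rw [← neg_sub ybar x, norm_neg, inner_neg_right] at hconv_x
  have hweighted_y := mul_nonneg (sub_nonneg.2 hτ1) hconv_y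
  have hweighted_x := mul_le_mul_of_nonneg_left hconv_x hτ0
  unfold lonagEnergy
  rw [hs'_sub]
  linarith

end Energy

theorem inv_one_add_smul_add_smul_mem {E : Type*} [AddCommGroup E] [Module ℝ E] {C : Set E}
    (hC : Convex ℝ C) {y s : E} (hy : y ∈ C) (hs : s ∈ C) {τ : ℝ} (hτ : 0 ≤ τ) :
    (1 + τ)⁻¹ • (y + τ • s) ∈ C := by
  rw [smul_add, smul_smul]
  exact hC hy hs (by positivity) (by positivity) (by field_simp)

section Iterates

open Metric

variable {E : Type*} [NormedAddCommGroup E] [InnerProductSpace ℝ E]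
  {φ : E → ℝ} {g : E → E} {Y : Set E} {μ L τ R : ℝ} {x : E} {y ybar s : ℕ → E}

/-- The LONAG recursion with an inexact search: instead of minimizing `φ` over the span of `y k`,
`ybar k` and `g (ybar k)`, the new iterate `y (k + 1)` only has to be as good as `y k` and as the
gradient step of length `1 / L` from `ybar k`. -/
structure IsLonagSequence (φ : E → ℝ) (g : E → E) (μ L τ : ℝ) (y ybar s : ℕ → E) : Prop where
  ybar_eq : ∀ k, ybar k = (1 + τ)⁻¹ • (y k + τ • s k)
  s_succ : ∀ k, s (k + 1) = (1 - τ) • s k + τ • ybar k - (τ / μ) • g (ybar k)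
  succ_le : ∀ k, φ (y (k + 1)) ≤ φ (y k)
  succ_le_gradientStep : ∀ k, φ (y (k + 1)) ≤ φ (ybar k - L⁻¹ • g (ybar k))

theorem IsLonagSequence.of_span_minimizer
    (hybar : ∀ k, ybar k = (1 + τ)⁻¹ • (y k + τ • s k))
    (hs : ∀ k, s (k + 1) = (1 - τ) • s k + τ • ybar k - (τ / μ) • g (ybar k))
    (hy : ∀ k, IsMinOn φ (Submodule.span ℝ {y k, ybar k, g (ybar k)}) (y (k + 1))) :
    IsLonagSequence φ g μ L τ y ybar s where
  ybar_eq := hybar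
  s_succ := hs
  succ_le k := hy k (Submodule.subset_span (by simp))
  succ_le_gradientStep k := hy k <|
    sub_mem (Submodule.subset_span (by simp))
      (Submodule.smul_mem _ _ (Submodule.subset_span (by simp)))

namespace IsLonagSequence

theorem ybar_mem_closedBall (h : IsLonagSequence φ g μ L τ y ybar s) (hτ0 : 0 ≤ τ) {k : ℕ}
    (hy : y k ∈ closedBall x R) (hs : s k ∈ closedBall x R) : ybar k ∈ closedBall x R :=
  h.ybar_eq k ▸ inv_one_add_smul_add_smul_mem (convex_closedBall x R) hy hs hτ0

theorem mem_of_sublevel_subset {C : Set E} (h : IsLonagSequence φ g μ L τ y ybar s)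
    (hlevel : {v | φ v ≤ φ (y 0)} ⊆ C) (k : ℕ) : y k ∈ C :=
  hlevel (antitone_nat_of_succ_le (f := fun k => φ (y k)) h.succ_le (Nat.zero_le k))

theorem succ_le_sub_norm_sq (h : IsLonagSequence φ g μ L τ y ybar s) (hL : 0 < L)
    (hupper : QuadraticUpperBoundOn φ g L Y) (hmin : IsMinOn φ Y x) (hgx : g x = 0)
    (hball : closedBall x (2 * R) ⊆ Y) {k : ℕ} (hybar : ybar k ∈ closedBall x R) :
    φ (y (k + 1)) ≤ φ (ybar k) - 1 / (2 * L) * ‖g (ybar k)‖ ^ 2 := by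
  refine (h.succ_le_gradientStep k).trans (hupper.gradientStep_le hL hmin hgx ?_)
  refine (closedBall_subset_closedBall' ?_).trans hball
  rw [← dist_eq_norm, ← two_mul]
  exact mul_le_mul_of_nonneg_left hybar zero_le_two

theorem lonagEnergy_succ_le (h : IsLonagSequence φ g μ L τ y ybar s) (hμ : 0 < μ) (hL : 0 < L)
    (hτ0 : 0 ≤ τ) (hτ1 : τ ≤ 1) (hτL : τ ^ 2 * L ≤ μ) (hlower : QuadraticLowerBoundOn φ g μ Y)
    (hx : x ∈ Y) {k : ℕ} (hy : y k ∈ Y) (hybar : ybar k ∈ Y)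
    (hdescent : φ (y (k + 1)) ≤ φ (ybar k) - 1 / (2 * L) * ‖g (ybar k)‖ ^ 2) :
    lonagEnergy φ μ x (y (k + 1)) (s (k + 1)) ≤ (1 - τ) * lonagEnergy φ μ x (y k) (s k) :=
  lonagEnergy_step_le hμ hL hτ0 hτ1 hτL (h.ybar_eq k) (h.s_succ k)
    (le_trans (by positivity) (hlower _ hy _ hybar)) (hlower _ hx _ hybar) hdescent

end IsLonagSequence

theorem stmt_14_general (hμ : 0 < μ) (hμL : μ ≤ L)
    (hlower : QuadraticLowerBoundOn φ g μ Y) (hupper : QuadraticUpperBoundOn φ g L Y)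
    (hgx : g x = 0) (hτ0 : 0 ≤ τ) (hτL : τ ^ 2 * L ≤ μ)
    (h : IsLonagSequence φ g μ L τ y ybar s)
    (hR : R = √(2 * lonagEnergy φ μ x (y 0) (s 0) / μ))
    (hlevel : {v | φ v ≤ φ (y 0)} ⊆ closedBall x R) (hball : closedBall x (2 * R) ⊆ Y) (k : ℕ) :
    (ybar k ∈ closedBall x R ∧ y (k + 1) ∈ closedBall x R) ∧
      φ (y (k + 1)) ≤ φ (ybar k) - 1 / (2 * L) * ‖g (ybar k)‖ ^ 2 ∧
      lonagEnergy φ μ x (y (k + 1)) (s (k + 1)) ≤ (1 - τ) * lonagEnergy φ μ x (y k) (s k) ∧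
      s (k + 1) ∈ closedBall x R := by
  have hL : 0 < L := hμ.trans_le hμL
  have hτ1 : τ ≤ 1 := (sq_le_one_iff₀ hτ0).1 <|
    le_of_mul_le_mul_right ((hτL.trans hμL).trans_eq (one_mul L).symm) hL
  have hR0 : 0 ≤ R := hR ▸ Real.sqrt_nonneg _
  have hRY : closedBall x R ⊆ Y := (closedBall_subset_closedBall (by linarith)).trans hball
  have hx : x ∈ Y := hRY (mem_closedBall_self hR0)
  have hmin : IsMinOn φ Y x := hlower.isMinOn hμ.le hx hgx
  have hy : ∀ j, y j ∈ closedBall x R := h.mem_of_sublevel_subset hlevel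
  have hmin_y (j : ℕ) : φ x ≤ φ (y j) := hmin (hRY (hy j))
  have hs {j : ℕ} (he : lonagEnergy φ μ x (y j) (s j) ≤ lonagEnergy φ μ x (y 0) (s 0)) :
      s j ∈ closedBall x R := hR ▸ mem_closedBall_of_lonagEnergy_le hμ (hmin_y j) he
  have hdescent {j : ℕ} (hsj : s j ∈ closedBall x R) :=
    h.succ_le_sub_norm_sq hL hupper hmin hgx hball (h.ybar_mem_closedBall hτ0 (hy j) hsj)
  have hdecay {j : ℕ} (hsj : s j ∈ closedBall x R) :=
    h.lonagEnergy_succ_le hμ hL hτ0 hτ1 hτL hlower hx (hRY (hy j))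
      (hRY (h.ybar_mem_closedBall hτ0 (hy j) hsj)) (hdescent hsj)
  have henergy (j : ℕ) : lonagEnergy φ μ x (y j) (s j) ≤ lonagEnergy φ μ x (y 0) (s 0) := by
    induction j with
    | zero => rfl
    | succ j ih =>
      have hnonneg := lonagEnergy_nonneg (s := s j) hμ.le (hmin_y j)
      exact (hdecay (hs ih)).trans
        ((mul_le_of_le_one_left hnonneg (sub_le_self 1 hτ0)).trans ih)
  have hsk := hs (henergy k)
  exact ⟨⟨h.ybar_mem_closedBall hτ0 (hy k) hsk, hy (k + 1)⟩, hdescent hsk, hdecay hsk,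
    hs (henergy (k + 1))⟩

end Iterates

theorem sq_mul_le_of_le_div_rpow_neg_half {μ L τ : ℝ} (hμ : 0 < μ) (hL : 0 < L) (hτ0 : 0 ≤ τ)
    (hτ : τ ≤ (L / μ) ^ (-(1 / 2 : ℝ))) : τ ^ 2 * L ≤ μ := by
  have hκ : 0 ≤ L / μ := by positivity
  rw [Real.rpow_neg hκ, ← Real.sqrt_eq_rpow] at hτ
  calc τ ^ 2 * L ≤ (√(L / μ))⁻¹ ^ 2 * L := by gcongr
    _ = μ := by rw [inv_pow, Real.sq_sqrt hκ]; field_simp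

/-- LONAG containment and convergence: under strong convexity, gradient bounds,
step-size 0 < τ ≤ κ^{−1/2}, and the initial containment conditions, the LONAG
iterates satisfy (a) ȳ_k, y_{k+1} ∈ B_{R₁}; (b) the sufficient-declination
property; (c) ℒ_{k+1} ≤ (1−τ)ℒ_k; (d) s_{k+1} ∈ B_{R₁}. -/
theorem stmt_14 (m : ℕ) (hm : 0 < m)
    (φ : EuclideanSpace ℝ (Fin m) → ℝ) (hφ : Differentiable ℝ φ)
    (Y : Set (EuclideanSpace ℝ (Fin m))) (hY : Convex ℝ Y)
    (μ L : ℝ) (hμ : 0 < μ) (hμL : μ ≤ L)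
    (hconv : ∀ y₁ ∈ Y, ∀ y₂ ∈ Y,
      μ / 2 * ‖y₁ - y₂‖ ^ 2 ≤ φ y₁ - φ y₂ - ⟪gradient φ y₂, y₁ - y₂⟫ ∧
      φ y₁ - φ y₂ - ⟪gradient φ y₂, y₁ - y₂⟫ ≤ L / 2 * ‖y₁ - y₂‖ ^ 2)
    (hgradbd : ∀ y₁ ∈ Y, ∀ y₂ ∈ Y,
      μ * ‖y₁ - y₂‖ ≤ ‖gradient φ y₁ - gradient φ y₂‖ ∧
      ‖gradient φ y₁ - gradient φ y₂‖ ≤ L * ‖y₁ - y₂‖)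
    (ystar : EuclideanSpace ℝ (Fin m)) (hystar : ystar ∈ Y)
    (hmin : ∀ v ∈ Y, φ ystar ≤ φ v)
    (huniq : ∀ v ∈ Y, φ v = φ ystar → v = ystar)
    (hgrad0 : gradient φ ystar = 0)
    (κ : ℝ) (hκ : κ = L / μ)
    (τ : ℝ) (hτ0 : 0 < τ) (hτ : τ ≤ κ ^ (-(1/2 : ℝ)))
    (y ybar s : ℕ → EuclideanSpace ℝ (Fin m))
    (L0 R1 R2 : ℝ)
    (hL0 : L0 = φ (y 0) - φ ystar + μ / 2 * ‖s 0 - ystar‖ ^ 2)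
    (hR1 : R1 = Real.sqrt (2 * L0 / μ))
    (hR2 : R2 = max (2 * R1) ((1 + τ * κ) * R1))
    (hs0 : ‖s 0 - ystar‖ ≤ R1)
    (hlev : {v : EuclideanSpace ℝ (Fin m) | φ v ≤ φ (y 0)} ⊆
      {v | ‖v - ystar‖ ≤ R1})
    (hB12 : {v : EuclideanSpace ℝ (Fin m) | ‖v - ystar‖ ≤ R1} ⊆
      {v | ‖v - ystar‖ ≤ R2})
    (hB2Y : {v : EuclideanSpace ℝ (Fin m) | ‖v - ystar‖ ≤ R2} ⊆ Y)
    (hrec1 : ∀ k, ybar k = (1 + τ)⁻¹ • (y k + τ • s k))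
    (hrec2 : ∀ k, s (k+1) = (1 - τ) • s k + τ • ybar k - (τ / μ) • gradient φ (ybar k))
    (hrec3 : ∀ k, y (k+1) ∈
        (Submodule.span ℝ {y k, ybar k, gradient φ (ybar k)} :
          Submodule ℝ (EuclideanSpace ℝ (Fin m))) ∧
      ∀ v ∈ (Submodule.span ℝ {y k, ybar k, gradient φ (ybar k)} :
          Submodule ℝ (EuclideanSpace ℝ (Fin m))),
        φ (y (k+1)) ≤ φ v) :
    ∀ k : ℕ,
      (‖ybar k - ystar‖ ≤ R1 ∧ ‖y (k+1) - ystar‖ ≤ R1) ∧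
      (φ (y (k+1)) ≤ φ (ybar k) - 1 / (2 * L) * ‖gradient φ (ybar k)‖ ^ 2) ∧
      (φ (y (k+1)) - φ ystar + μ / 2 * ‖s (k+1) - ystar‖ ^ 2 ≤
        (1 - τ) * (φ (y k) - φ ystar + μ / 2 * ‖s k - ystar‖ ^ 2)) ∧
      ‖s (k+1) - ystar‖ ≤ R1 := by
  have hiter : IsLonagSequence φ (gradient φ) μ L τ y ybar s :=
    .of_span_minimizer hrec1 hrec2 fun k => isMinOn_iff.2 (hrec3 k).2
  simp only [← mem_closedBall_iff_norm, Set.ofPred_mem_eq] at hlev hB2Y ⊢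
  subst hκ hL0
  exact stmt_14_general hμ hμL (fun v hv w hw => (hconv v hv w hw).1)
    (fun v hv w hw => (hconv v hv w hw).2) hgrad0 hτ0.le
    (sq_mul_le_of_le_div_rpow_neg_half hμ (hμ.trans_le hμL) hτ0.le hτ) hiter hR1 hlev
    ((Metric.closedBall_subset_closedBall (hR2 ▸ le_max_left _ _)).trans hB2Y)
end

section
/- For any x ∈ ℝⁿ, ψ†(QᵀMx) = (q + (I − qqᵀM)x)/‖q + (I − qqᵀM)x‖_M. -/
open Matrix

/-!
With `P = [Q, q]`, the hypotheses and the symmetry of `M` say that `Pᵀ M` is a left inverse of `P`.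
Since `P` is square, it is also a right inverse, so `Q Qᵀ M + q qᵀ M = I`; hence
`Q (Qᵀ M x) = (I - q qᵀ M) x`, and both sides are the `M`-normalization of the same vector.
-/

section ResolutionOfIdentity

variable {ι κ R : Type*} [Fintype ι]

theorem vecMul_vecMul_eq_transpose_mul_mulVec_of_isSymm [NonUnitalCommSemiring R]
    {M : Matrix ι ι R} (hM : M.IsSymm) (Q : Matrix ι κ R) (q : ι → R) :
    q ᵥ* M ᵥ* Q = (Qᵀ * M) *ᵥ q := by
  rw [← mulVec_mulVec, mulVec_transpose, ← mulVec_transpose M, hM.eq]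

variable [DecidableEq ι] [Fintype κ] [DecidableEq κ]

theorem mul_add_vecMulVec_eq_one_of_biorthogonal [Semiring R] [IsStablyFiniteRing R]
    (hcard : Fintype.card ι = Fintype.card κ + 1)
    {Q : Matrix ι κ R} {P : Matrix κ ι R} {q p : ι → R}
    (hPQ : P * Q = 1) (hPq : P *ᵥ q = 0) (hpQ : p ᵥ* Q = 0) (hpq : p ⬝ᵥ q = 1) :
    Q * P + vecMulVec q p = 1 := by
  have hcorner : replicateRow Unit p * replicateCol Unit q = 1 := by
    ext
    simp [hpq]
  have hleft : fromRows P (replicateRow Unit p) * fromCols Q (replicateCol Unit q) = 1 := by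
    rw [fromRows_mul_fromCols, hPQ, ← replicateCol_mulVec, hPq, replicateCol_zero,
      ← replicateRow_vecMul, hpQ, replicateRow_zero, hcorner, fromBlocks_one]
  have hright : fromCols Q (replicateCol Unit q) * fromRows P (replicateRow Unit p) = 1 :=
    (mul_eq_one_comm_of_card_eq _ _ _ (by simp [hcard])).mp hleft
  rwa [fromCols_mul_fromRows, ← vecMulVec_eq] at hright

theorem mul_transpose_mul_eq_one_sub_vecMulVec [CommRing R]
    (hcard : Fintype.card ι = Fintype.card κ + 1)
    {M : Matrix ι ι R} (hM : M.IsSymm) {Q : Matrix ι κ R} {q : ι → R}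
    (hq : q ⬝ᵥ (M *ᵥ q) = 1) (hQ : Qᵀ * M * Q = 1) (hQq : (Qᵀ * M) *ᵥ q = 0) :
    Q * (Qᵀ * M) = 1 - vecMulVec q (q ᵥ* M) := by
  have hqQ : q ᵥ* M ᵥ* Q = 0 :=
    (vecMul_vecMul_eq_transpose_mul_mulVec_of_isSymm hM Q q).trans hQq
  have hqq : q ᵥ* M ⬝ᵥ q = 1 := (dotProduct_mulVec q M q).symm.trans hq
  exact eq_sub_of_add_eq (mul_add_vecMulVec_eq_one_of_biorthogonal hcard hQ hQq hqQ hqq)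

end ResolutionOfIdentity

/-- For any x ∈ ℝⁿ, ψ†(QᵀMx) = (q + (I − qqᵀM)x)/‖q + (I − qqᵀM)x‖_M. -/
theorem stmt_16 (n : ℕ)
    (M : Matrix (Fin (n+2)) (Fin (n+2)) ℝ) (hM : M.PosDef)
    (q : Fin (n+2) → ℝ) (Q : Matrix (Fin (n+2)) (Fin (n+1)) ℝ)
    (hq1 : q ⬝ᵥ (M *ᵥ q) = 1)
    (hQMQ : Qᵀ * M * Q = 1)
    (hQMq : (Qᵀ * M) *ᵥ q = 0)
    :
    ∀ x : Fin (n+2) → ℝ,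
      psiDag M q Q ((Qᵀ * M) *ᵥ x) =
        (Mnorm M (q + ((1 - vecMulVec q (q ᵥ* M)) *ᵥ x)))⁻¹ •
          (q + ((1 - vecMulVec q (q ᵥ* M)) *ᵥ x)) := by
  intro x
  have hsymm : M.IsSymm := isHermitian_iff_isSymm.mp hM.isHermitian
  have hproj : Q * (Qᵀ * M) = 1 - vecMulVec q (q ᵥ* M) :=
    mul_transpose_mul_eq_one_sub_vecMulVec (by simp) hsymm hq1 hQMQ hQMq
  rw [psiDag, mulVec_mulVec, hproj, add_comm q]
end
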